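/- Let p be an odd prime and K := ℚ(√−p). Then the following are equivalent: (i) p ≡ 3 (mod 8); (ii) the prime 2 is inert in K (i.e. 2·O_K is a prime ideal of the ring of integers O_K) and the 2-torsion subgroup Cl(K)[2] of the ideal class group of K is trivial. -/

import Mathlib

/-!
Statement 19: for an odd prime `p` and `K = ℚ(√−p)`, one has `p ≡ 3 (mod 8)` if and
only if 2 is inert in `K` and the class group of `K` has trivial 2-torsion.
-/

open scoped NumberField

/-- `K` is (isomorphic to) the quadratic field `ℚ(√−d)`. -/
def IsQsqrtNeg (d : ℕ) (K : Type*) [Field K] [Algebra ℚ K] : Prop :=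
  ∃ α : K, α ^ 2 = -(d : K) ∧ Algebra.adjoin ℚ {α} = ⊤

/-!
Write `Δ = b² + 4a` for the discriminant of the order `ℤ[ω]`, `ω² = a + bω`. The number `2` is prime
in `ℤ[ω]` exactly when the norm form reduces to `x² + xy + y²` modulo `2`, i.e. when `a` and `b` are
odd; this singles out `p ≡ 3 (mod 8)`.

Let `I² = (β)`. As `Δ < 0`, norms are nonnegative, so `β` has norm `N(I)²`, and by Hilbert 90 some
multiple `J = γI` satisfies `J² = (r)` with `r ∈ ℤ`. Removing square factors, `r` may be taken
squarefree. A prime `q ∣ r` not dividing `Δ` is unramified, so it divides `J` and `q² ∣ r`, which is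
absurd; hence `r ∣ Δ`. If `Δ` is prime, this leaves only `J = (1)` and `J = (√Δ)`.
-/

theorem isDedekindDomain_of_ringEquiv {R S : Type*} [CommRing R] [CommRing S]
    [IsDedekindDomain S] (e : R ≃+* S) : IsDedekindDomain R := by
  have := MulEquiv.isDomain S e.toMulEquiv
  let := e.symm.toRingHom.toAlgebra
  have : IsLocalization (⊥ : Submonoid S) S := IsLocalization.of_le_isUnit bot_le
  have : IsLocalization (⊥ : Submonoid S) R :=
    IsLocalization.isLocalization_of_algEquiv ⊥ (AlgEquiv.ofRingEquiv (f := e.symm) fun _ ↦ rfl)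
  exact IsLocalization.isDedekindDomain S bot_le R

open UniqueFactorizationMonoid in
theorem dvd_of_squarefree_of_forall_prime_dvd {M : Type*} [CommMonoidWithZero M]
    [UniqueFactorizationMonoid M] {x y : M} (hx : Squarefree x)
    (h : ∀ q, Prime q → q ∣ x → q ∣ y) : x ∣ y := by
  rcases eq_or_ne x 0 with rfl | hx0
  · exact (hx 0 (zero_mul 0).dvd).dvd
  rcases eq_or_ne y 0 with rfl | hy
  · exact dvd_zero x
  let := UniqueFactorizationMonoid.strongNormalizationMonoid (α := M)
  refine (hx.isRadical.dvd_radical hx0).trans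
    ((radical_dvd_iff_primeFactors_subset hy).2 fun q hq ↦ ?_)
  rw [mem_primeFactors, mem_normalizedFactors_iff' ‹_›] at hq ⊢
  exact ⟨hq.1, hq.2.1, h q hq.1.prime hq.2.2⟩

theorem exists_sq_mul_squarefree_int (r : ℤ) : ∃ s t : ℤ, r = s ^ 2 * t ∧ Squarefree t := by
  obtain ⟨t, s, hr, ht⟩ := Nat.sq_mul_squarefree r.natAbs
  have ht' : Squarefree (t : ℤ) := Int.squarefree_natCast.2 ht
  have hr' : (r.natAbs : ℤ) = s ^ 2 * t := by exact_mod_cast hr.symm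
  rcases r.natAbs_eq with h | h
  · exact ⟨s, t, h.trans hr', ht'⟩
  · exact ⟨s, -t, by rw [h, hr', mul_neg], ht'.squarefree_of_dvd (neg_dvd.2 dvd_rfl)⟩

theorem exists_intCast_eq_of_squarefree_mul_sq {d : ℤ} (hd : Squarefree d) {q : ℚ} {k : ℤ}
    (h : d * q ^ 2 = k) : ∃ w : ℤ, (w : ℚ) = q := by
  have hdq : IsIntegral ℤ (d * q) := by
    refine IsIntegral.of_pow two_pos ?_
    rw [show (d * q) ^ 2 = ((d * k : ℤ) : ℚ) by push_cast; rw [← h]; ring]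
    exact isIntegral_algebraMap (R := ℤ) (A := ℚ)
  obtain ⟨z, hz⟩ : ∃ z : ℤ, (z : ℚ) = d * q := IsIntegrallyClosed.isIntegral_iff.1 hdq
  have hz2 : z ^ 2 = d * k := by
    have : (z : ℚ) ^ 2 = d * k := by rw [hz, ← h]; ring
    exact_mod_cast this
  obtain ⟨w, rfl⟩ := hd.isRadical 2 z (Dvd.intro _ hz2.symm)
  have hd0 : (d : ℚ) ≠ 0 := by exact_mod_cast hd.ne_zero
  exact ⟨w, mul_left_cancel₀ hd0 (by exact_mod_cast hz)⟩

theorem isPrincipal_span_singleton_mul_iff {R : Type*} [CommRing R] [IsDomain R] {c : R}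
    (hc : c ≠ 0) {I : Ideal R} : (Ideal.span {c} * I).IsPrincipal ↔ I.IsPrincipal := by
  constructor
  · rintro ⟨x, hx⟩
    rw [← Ideal.span] at hx
    have hcx : x ∈ Ideal.span {c} * I := by
      rw [hx]
      exact Ideal.mem_span_singleton_self x
    obtain ⟨y, rfl⟩ := Ideal.mem_span_singleton.1 (Ideal.mul_le_left hcx)
    rw [← Ideal.span_singleton_mul_span_singleton, Ideal.span_singleton_mul_right_inj hc] at hx
    exact ⟨y, hx⟩
  · rintro ⟨x, rfl⟩
    exact ⟨c * x, Ideal.span_singleton_mul_span_singleton c x⟩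

section

open QuadraticAlgebra

variable {R : Type*} [CommRing R] {a b : R}

theorem algebraNorm_quadraticAlgebra (z : QuadraticAlgebra R a b) : Algebra.norm R z = z.norm := by
  rw [Algebra.norm_apply, ← det_toLinearMap_eq_norm]
  rfl

theorem quadraticAlgebra_four_mul_norm (z : QuadraticAlgebra R a b) :
    4 * z.norm = z.trace ^ 2 - (b ^ 2 + 4 * a) * z.im ^ 2 := by
  rw [norm_def, trace_def]
  ring

theorem quadraticAlgebra_norm_nonneg [LinearOrder R] [IsStrictOrderedRing R]
    (hΔ : b ^ 2 + 4 * a ≤ 0) (z : QuadraticAlgebra R a b) : 0 ≤ z.norm := by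
  have h := quadraticAlgebra_four_mul_norm z
  nlinarith [sq_nonneg z.trace, mul_nonneg (neg_nonneg.2 hΔ) (sq_nonneg z.im)]

theorem sq_ne_add_mul_of_discr_neg [LinearOrder R] [IsStrictOrderedRing R]
    (hΔ : b ^ 2 + 4 * a < 0) (r : R) : r ^ 2 ≠ a + b * r := by
  intro h
  nlinarith [sq_nonneg (2 * r - b)]

theorem quadraticAlgebra_sq_two_mul_omega_sub :
    (2 * ω - algebraMap R (QuadraticAlgebra R a b) b) ^ 2 = algebraMap R _ (b ^ 2 + 4 * a) := by
  rw [sub_sq, mul_pow, sq ω, omega_mul_omega_eq_algebraMap]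
  simp only [map_add, map_mul, map_pow, map_ofNat]
  ring

theorem quadraticAlgebra_algebraMap_dvd_of_dvd_sq {q : R} (hq : Prime q)
    (hqΔ : ¬ q ∣ b ^ 2 + 4 * a) {z : QuadraticAlgebra R a b}
    (hz : algebraMap R _ q ∣ z ^ 2) : algebraMap R _ q ∣ z := by
  rw [algebraMap_dvd_iff, sq, re_mul, im_mul] at hz
  obtain ⟨hre, him⟩ := hz
  have hdvd : q ∣ z.im * z.trace := by
    convert him using 1
    rw [trace_def]
    ring
  have hΔ : (b ^ 2 + 4 * a) * z.im ^ 2 = 4 * (z.re * z.re + a * z.im * z.im)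
      + 2 * b * (z.im * z.trace) - z.trace * z.trace := by
    rw [trace_def]
    ring
  have him' : q ∣ z.im := by
    refine (hq.dvd_or_dvd hdvd).elim id fun htr ↦ ?_
    have : q ∣ (b ^ 2 + 4 * a) * z.im ^ 2 :=
      hΔ ▸ ((hre.mul_left _).add (hdvd.mul_left _)).sub (htr.mul_left _)
    exact hq.dvd_of_dvd_pow ((hq.dvd_or_dvd this).resolve_left hqΔ)
  refine algebraMap_dvd_iff.2 ⟨hq.dvd_of_dvd_pow (n := 2) ?_, him'⟩
  rwa [sq, ← dvd_add_left (him'.mul_left (a * z.im))]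

theorem quadraticAlgebra_star_algebraMap (r : R) :
    star (algebraMap R (QuadraticAlgebra R a b) r) = algebraMap R _ r := by
  ext <;> simp

-- Hilbert 90 for `β / n`, cleared of denominators.
theorem quadraticAlgebra_exists_mul_sq_eq_algebraMap [Nontrivial R] {n : R}
    {β : QuadraticAlgebra R a b} (hβ : β.norm = n ^ 2) :
    ∃ γ ≠ 0, ∃ r, β * γ ^ 2 = algebraMap R _ r := by
  by_cases h0 : algebraMap R _ n + β = 0
  · refine ⟨1, one_ne_zero, -n, ?_⟩
    rw [map_neg]
    linear_combination h0
  · refine ⟨star (algebraMap R _ n + β), star_ne_zero.2 h0,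
      n * (algebraMap R _ n + β).norm, ?_⟩
    have hββ := algebraMap_norm_eq_mul_star β
    rw [hβ, map_pow] at hββ
    rw [map_mul, algebraMap_norm_eq_mul_star, star_add, quadraticAlgebra_star_algebraMap]
    linear_combination -(algebraMap R _ n + star β) * hββ

theorem isIntegral_quadraticAlgebra_star {A : Type*} [CommRing A] [Algebra A R]
    {z : QuadraticAlgebra R a b} (hz : IsIntegral A z) : IsIntegral A (star z) := by
  refine IsIntegral.map_of_comp_eq (RingHom.id A) (starRingEnd _) ?_ hz
  ext1 r
  simp only [RingHom.comp_apply, RingHom.id_apply, starRingEnd_apply,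
    IsScalarTower.algebraMap_apply A R (QuadraticAlgebra R a b), quadraticAlgebra_star_algebraMap]

theorem isIntegral_quadraticAlgebra_trace {A : Type*} [CommRing A] [Algebra A R]
    {z : QuadraticAlgebra R a b} (hz : IsIntegral A z) : IsIntegral A z.trace := by
  rw [← isIntegral_algebraMap_iff (B := QuadraticAlgebra R a b) algebraMap_injective,
    algebraMap_trace_eq_add_star]
  exact hz.add (isIntegral_quadraticAlgebra_star hz)

theorem isIntegral_quadraticAlgebra_norm {A : Type*} [CommRing A] [Algebra A R]
    {z : QuadraticAlgebra R a b} (hz : IsIntegral A z) : IsIntegral A z.norm := by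
  rw [← isIntegral_algebraMap_iff (B := QuadraticAlgebra R a b) algebraMap_injective,
    algebraMap_norm_eq_mul_star]
  exact hz.mul (isIntegral_quadraticAlgebra_star hz)

theorem isIntegral_of_mul_self_eq {A : Type*} [Ring A] [Algebra R A] {u : A}
    (hu : u * u = a • 1 + b • u) : IsIntegral R u := by
  simpa using (Algebra.IsIntegral.isIntegral (R := R) (ω : QuadraticAlgebra R a b)).map
    (QuadraticAlgebra.lift ⟨u, hu⟩)

theorem nonempty_quadraticAlgebra_algEquiv {F K : Type*} [Field F] [Ring K] [Nontrivial K]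
    [Algebra F K] {a b : F} (hirr : ∀ r : F, r ^ 2 ≠ a + b * r) {θ : K}
    (hθ : θ * θ = a • 1 + b • θ) (htop : Algebra.adjoin F {θ} = ⊤) :
    Nonempty (QuadraticAlgebra F a b ≃ₐ[F] K) := by
  have : Fact (∀ r : F, r ^ 2 ≠ a + b * r) := ⟨hirr⟩
  let f : QuadraticAlgebra F a b →ₐ[F] K := QuadraticAlgebra.lift ⟨θ, hθ⟩
  have hf : f.range = ⊤ := by
    rw [← top_le_iff, ← htop, Algebra.adjoin_le_iff, Set.singleton_subset_iff]
    exact ⟨ω, by simp [f]⟩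
  exact ⟨AlgEquiv.ofBijective f ⟨f.toRingHom.injective, AlgHom.range_eq_top f |>.1 hf⟩⟩

end

/-- The quadratic order `ℤ[ω]` with `ω² = a + bω`, of discriminant `b² + 4a`. -/
abbrev QuadraticOrder (a b : ℤ) : Type := QuadraticAlgebra ℤ a b

namespace QuadraticOrder

open QuadraticAlgebra

variable {a b : ℤ}

/-- The order `ℤ[ω]` is maximal: every integral element of `ℚ[ω]` has integral coordinates. -/
def IsMaximal (a b : ℤ) : Prop :=
  ∀ z : QuadraticAlgebra ℚ (a : ℚ) (b : ℚ), IsIntegral ℤ z → ∃ x y : ℤ, z = ⟨x, y⟩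

theorem exists_discr_mul_im_sq_eq {z : QuadraticAlgebra ℚ (a : ℚ) (b : ℚ)} (hz : IsIntegral ℤ z) :
    ∃ s n : ℤ, ((b ^ 2 + 4 * a : ℤ) : ℚ) * z.im ^ 2 = (s ^ 2 - 4 * n : ℤ) := by
  obtain ⟨s, hs⟩ := IsIntegrallyClosed.isIntegral_iff.1 (isIntegral_quadraticAlgebra_trace hz)
  obtain ⟨n, hn⟩ := IsIntegrallyClosed.isIntegral_iff.1 (isIntegral_quadraticAlgebra_norm hz)
  refine ⟨s, n, ?_⟩
  have h := quadraticAlgebra_four_mul_norm z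
  rw [← hs, ← hn, eq_intCast, eq_intCast] at h
  push_cast
  linear_combination h

theorem isMaximal_of_forall_im
    (h : ∀ z : QuadraticAlgebra ℚ (a : ℚ) (b : ℚ), IsIntegral ℤ z → ∃ y : ℤ, z.im = y) :
    IsMaximal a b := by
  intro z hz
  obtain ⟨y, hy⟩ := h z hz
  have hω : IsIntegral ℤ (ω : QuadraticAlgebra ℚ (a : ℚ) (b : ℚ)) :=
    isIntegral_of_mul_self_eq (a := a) (b := b) (by ext <;> simp)
  have hre : algebraMap ℚ (QuadraticAlgebra ℚ (a : ℚ) (b : ℚ)) z.re = z - y • ω := by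
    ext <;> simp [hy]
  have hint : IsIntegral ℤ z.re := by
    rw [← isIntegral_algebraMap_iff (B := QuadraticAlgebra ℚ (a : ℚ) (b : ℚ)) algebraMap_injective,
      hre]
    exact hz.sub (hω.smul y)
  obtain ⟨x, hx⟩ := IsIntegrallyClosed.isIntegral_iff.1 hint
  exact ⟨x, y, QuadraticAlgebra.ext hx.symm hy⟩

theorem isMaximal_of_squarefree_discr (hΔ : Squarefree (b ^ 2 + 4 * a)) : IsMaximal a b :=
  isMaximal_of_forall_im fun z hz ↦ by
    obtain ⟨s, n, hsn⟩ := exists_discr_mul_im_sq_eq hz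
    obtain ⟨y, hy⟩ := exists_intCast_eq_of_squarefree_mul_sq hΔ hsn
    exact ⟨y, hy.symm⟩

theorem isMaximal_zero_of_squarefree (ha : Squarefree a) (ha4 : a % 4 ≠ 1) : IsMaximal a 0 :=
  isMaximal_of_forall_im fun z hz ↦ by
    obtain ⟨s, n, hsn⟩ := exists_discr_mul_im_sq_eq hz
    have htwo : (a : ℚ) * (2 * z.im) ^ 2 = (s ^ 2 - 4 * n : ℤ) := by
      rw [← hsn]
      push_cast
      ring
    obtain ⟨w, hw⟩ := exists_intCast_eq_of_squarefree_mul_sq ha htwo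
    have haw : a * w ^ 2 = s ^ 2 - 4 * n := by
      rw [← hw] at htwo
      exact_mod_cast htwo
    have ha0 : a % 4 ≠ 0 := fun h0 ↦ by
      simpa [Int.isUnit_iff] using ha 2 (Int.dvd_of_emod_eq_zero h0)
    obtain ⟨y, rfl⟩ : Even w := by
      by_contra hw_odd
      have hw4 := Int.sq_mod_four_eq_one_of_odd (Int.not_even_iff_odd.1 hw_odd)
      have haw4 : a % 4 = s ^ 2 % 4 := by
        have := Int.mul_emod a (w ^ 2) 4
        rw [hw4, mul_one, Int.emod_emod, haw] at this
        lia
      rcases s.even_or_odd with ⟨r, rfl⟩ | hs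
      · exact ha0 (haw4.trans (Int.emod_eq_zero_of_dvd ⟨r ^ 2, by ring⟩))
      · exact ha4 (haw4.trans (Int.sq_mod_four_eq_one_of_odd hs))
    exact ⟨y, by push_cast at hw; linarith⟩

theorem IsMaximal.nonempty_ringEquiv {K : Type*} [Field K] [CharZero K] (h : IsMaximal a b)
    (e : QuadraticAlgebra ℚ (a : ℚ) (b : ℚ) ≃ₐ[ℚ] K) : Nonempty (QuadraticOrder a b ≃+* 𝓞 K) := by
  let ι : QuadraticOrder a b →ₐ[ℤ] QuadraticAlgebra ℚ (a : ℚ) (b : ℚ) :=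
    QuadraticAlgebra.lift ⟨ω, by ext <;> simp⟩
  have hι (z : QuadraticOrder a b) : ι z = ⟨z.re, z.im⟩ := by
    ext <;> simp [ι, lift]
  let f : QuadraticOrder a b →ₐ[ℤ] K := (e.toAlgHom.restrictScalars ℤ).comp ι
  let := f.toRingHom.toAlgebra
  have : IsIntegralClosure (QuadraticOrder a b) ℤ K :=
    { algebraMap_injective := e.injective.comp fun z w hzw ↦ by
        change ι z = ι w at hzw
        rw [hι, hι, QuadraticAlgebra.ext_iff] at hzw
        exact QuadraticAlgebra.ext (Int.cast_injective hzw.1) (Int.cast_injective hzw.2)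
      isIntegral_iff := fun {x} ↦ by
        constructor
        · intro hx
          obtain ⟨r, s, hrs⟩ := h _ (hx.map (e.symm.toAlgHom.restrictScalars ℤ))
          refine ⟨⟨r, s⟩, (congr_arg e ((hι ⟨r, s⟩).trans hrs.symm)).trans ?_⟩
          exact e.apply_symm_apply x
        · rintro ⟨y, rfl⟩
          exact (Algebra.IsIntegral.isIntegral y).map f }
  exact ⟨(NumberField.RingOfIntegers.equiv (QuadraticOrder a b)).symm⟩

theorem prime_two_iff : Prime (2 : QuadraticOrder a b) ↔ Odd a ∧ Odd b := by
  have htwo : (2 : QuadraticOrder a b) = algebraMap ℤ _ 2 := by rw [map_ofNat]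
  have htwo_dvd (z : QuadraticOrder a b) : 2 ∣ z ↔ 2 ∣ z.re ∧ 2 ∣ z.im := by
    rw [htwo, algebraMap_dvd_iff]
  constructor
  · intro h
    have hb : Odd b := by
      by_contra hb
      rw [Int.not_odd_iff_even] at hb
      have : (2 : QuadraticOrder a b) ∣ (ω + algebraMap ℤ _ a) ^ 2 := by
        rw [htwo_dvd]
        simp [sq, parity_simps, ← even_iff_two_dvd, hb]
      have := h.dvd_of_dvd_pow this
      simp [htwo_dvd] at this
    refine ⟨?_, hb⟩
    by_contra ha
    rw [Int.not_odd_iff_even] at ha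
    have : (2 : QuadraticOrder a b) ∣ ω * (ω - algebraMap ℤ _ b) := by
      rw [htwo_dvd]
      simp [← even_iff_two_dvd, ha]
    have := h.dvd_or_dvd this
    simp [htwo_dvd] at this
  · rintro ⟨ha, hb⟩
    have htwo_dvd_norm (z : QuadraticOrder a b) : 2 ∣ z ↔ 2 ∣ z.norm := by
      rw [htwo_dvd, norm_def]
      simp only [← even_iff_two_dvd, Int.even_sub, Int.even_add, Int.even_mul,
        Int.not_even_iff_odd.2 ha, Int.not_even_iff_odd.2 hb]
      tauto
    refine ⟨two_ne_zero, fun h ↦ ?_, fun z w hzw ↦ ?_⟩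
    · simpa [htwo_dvd] using isUnit_iff_dvd_one.1 h
    · rw [htwo_dvd_norm] at hzw ⊢
      rw [htwo_dvd_norm w]
      rw [map_mul] at hzw
      exact Int.prime_two.dvd_or_dvd hzw

theorem isPrime_span_two_iff_of_ringEquiv {S : Type*} [CommRing S] (e : QuadraticOrder a b ≃+* S) :
    (Ideal.span {(2 : S)}).IsPrime ↔ Odd a ∧ Odd b := by
  have htwo : e 2 = 2 := map_ofNat e 2
  have htwo_ne : (2 : S) ≠ 0 := htwo ▸ (map_ne_zero_iff e e.injective).2 two_ne_zero
  rw [Ideal.span_singleton_prime htwo_ne, ← htwo, MulEquiv.prime_iff, prime_two_iff]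

variable [IsDedekindDomain (QuadraticOrder a b)]

theorem isPrincipal_of_sq_eq_span_of_squarefree (hΔ : Prime (b ^ 2 + 4 * a)) {t : ℤ}
    (ht : Squarefree t) {J : Ideal (QuadraticOrder a b)}
    (hJ : J ^ 2 = Ideal.span {algebraMap ℤ _ t}) : J.IsPrincipal := by
  have htΔ : t ∣ b ^ 2 + 4 * a :=
    dvd_of_squarefree_of_forall_prime_dvd ht fun q hq hqt ↦ by
      by_contra hqΔ
      have hqJ : J ≤ Ideal.span {algebraMap ℤ _ q} := fun z hz ↦ by
        rw [Ideal.mem_span_singleton]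
        have htz : algebraMap ℤ _ t ∣ z ^ 2 :=
          Ideal.mem_span_singleton.1 (hJ ▸ Ideal.pow_mem_pow hz 2)
        exact quadraticAlgebra_algebraMap_dvd_of_dvd_sq hq hqΔ
          ((_root_.map_dvd (algebraMap ℤ _) hqt).trans htz)
      have hq2t : q ^ 2 ∣ t := by
        rw [← algebraMap_dvd_iff_dvd (a := a) (b := b), map_pow,
          ← Ideal.span_singleton_le_span_singleton, ← hJ, ← Ideal.span_singleton_pow]
        exact Ideal.pow_right_mono hqJ 2
      exact hq.not_isUnit (ht q (sq q ▸ hq2t))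
  rcases hΔ.irreducible.dvd_iff.1 htΔ with htu | htassoc
  · rw [Ideal.span_singleton_eq_top.2 (htu.map _)] at hJ
    rw [(Ideal.eq_top_iff_one J).2 (Ideal.pow_le_self two_ne_zero (hJ ▸ Submodule.mem_top))]
    exact top_isPrincipal
  · have hsq : J ^ 2 = Ideal.span {2 * ω - algebraMap ℤ _ b} ^ 2 := by
      rw [hJ, Ideal.span_singleton_pow, quadraticAlgebra_sq_two_mul_omega_sub,
        Ideal.span_singleton_eq_span_singleton]
      exact (htassoc.map (algebraMap ℤ _)).symm
    have hJω : J = Ideal.span {2 * ω - algebraMap ℤ _ b} :=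
      dvd_antisymm ((UniqueFactorizationMonoid.pow_dvd_pow_iff_dvd two_ne_zero).1 hsq.dvd)
        ((UniqueFactorizationMonoid.pow_dvd_pow_iff_dvd two_ne_zero).1 hsq.symm.dvd)
    exact ⟨_, hJω⟩

theorem isPrincipal_of_sq_eq_span_algebraMap (hΔ : Prime (b ^ 2 + 4 * a)) {r : ℤ}
    {J : Ideal (QuadraticOrder a b)} (hJ : J ^ 2 = Ideal.span {algebraMap ℤ _ r}) :
    J.IsPrincipal := by
  obtain ⟨s, t, rfl, ht⟩ := exists_sq_mul_squarefree_int r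
  rcases eq_or_ne s 0 with rfl | hs0
  · have hJ0 : J ^ 2 = 0 := by simpa using hJ
    rw [pow_eq_zero_iff two_ne_zero] at hJ0
    exact hJ0 ▸ bot_isPrincipal
  have hs : algebraMap ℤ (QuadraticOrder a b) s ≠ 0 := by
    rwa [Ne, map_eq_zero_iff _ algebraMap_injective]
  rw [map_mul, map_pow, ← Ideal.span_singleton_mul_span_singleton,
    ← Ideal.span_singleton_pow] at hJ
  obtain ⟨J', rfl⟩ :=
    (UniqueFactorizationMonoid.pow_dvd_pow_iff_dvd two_ne_zero).1 (Dvd.intro _ hJ.symm)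
  rw [isPrincipal_span_singleton_mul_iff hs]
  rw [mul_pow, Ideal.span_singleton_pow,
    Ideal.span_singleton_mul_right_inj (pow_ne_zero 2 hs)] at hJ
  exact isPrincipal_of_sq_eq_span_of_squarefree hΔ ht hJ

theorem isPrincipal_of_isPrincipal_sq (hΔ : Prime (b ^ 2 + 4 * a)) (hΔ0 : b ^ 2 + 4 * a ≤ 0)
    {I : Ideal (QuadraticOrder a b)} (hI : (I ^ 2).IsPrincipal) : I.IsPrincipal := by
  obtain ⟨β, hβ⟩ := hI
  rw [← Ideal.span] at hβ
  have hβnorm : β.norm = (Ideal.absNorm I : ℤ) ^ 2 := by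
    have h := congr_arg (Nat.cast (R := ℤ)) (congr_arg Ideal.absNorm hβ)
    rw [map_pow, Ideal.absNorm_span_singleton, algebraNorm_quadraticAlgebra, Nat.cast_pow,
      Int.natCast_natAbs, abs_of_nonneg (quadraticAlgebra_norm_nonneg hΔ0 β)] at h
    exact h.symm
  obtain ⟨γ, hγ, r, hγr⟩ := quadraticAlgebra_exists_mul_sq_eq_algebraMap hβnorm
  rw [← isPrincipal_span_singleton_mul_iff hγ]
  refine isPrincipal_of_sq_eq_span_algebraMap hΔ (r := r) ?_
  rw [mul_pow, hβ, Ideal.span_singleton_pow, Ideal.span_singleton_mul_span_singleton, mul_comm, hγr]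

theorem classGroup_eq_one_of_sq_eq_one (hΔ : Prime (b ^ 2 + 4 * a)) (hΔ0 : b ^ 2 + 4 * a ≤ 0)
    {x : ClassGroup (QuadraticOrder a b)} (hx : x ^ 2 = 1) : x = 1 := by
  obtain ⟨I, rfl⟩ := ClassGroup.mk0_surjective x
  rw [← map_pow, ClassGroup.mk0_eq_one_iff, SubmonoidClass.coe_pow] at hx
  rw [ClassGroup.mk0_eq_one_iff]
  exact isPrincipal_of_isPrincipal_sq hΔ hΔ0 hx

end QuadraticOrder

namespace IsQsqrtNeg

variable {d : ℕ} {K : Type*} [Field K]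

theorem nonempty_quadraticOrder_zero_ringEquiv [CharZero K] (hK : IsQsqrtNeg d K)
    (hd : Squarefree d) (hd4 : d % 4 ≠ 3) : Nonempty (QuadraticOrder (-d) 0 ≃+* 𝓞 K) := by
  obtain ⟨α, hα, htop⟩ := hK
  have hmax : QuadraticOrder.IsMaximal (-d) 0 :=
    QuadraticOrder.isMaximal_zero_of_squarefree
      ((Int.squarefree_natCast.2 hd).squarefree_of_dvd (neg_dvd.2 dvd_rfl)) (by lia)
  have hdpos : (0 : ℚ) < d := by exact_mod_cast hd.ne_zero.bot_lt
  obtain ⟨e⟩ := nonempty_quadraticAlgebra_algEquiv (a := ((-d : ℤ) : ℚ)) (b := ((0 : ℤ) : ℚ))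
    (sq_ne_add_mul_of_discr_neg (by push_cast; linarith)) (θ := α)
    (by simp [Algebra.smul_def, ← sq, hα]) htop
  exact hmax.nonempty_ringEquiv e

theorem nonempty_quadraticOrder_one_ringEquiv [CharZero K] (hK : IsQsqrtNeg d K)
    (hd : Squarefree d) {a : ℤ} (ha : 1 ^ 2 + 4 * a = -d) :
    Nonempty (QuadraticOrder a 1 ≃+* 𝓞 K) := by
  obtain ⟨α, hα, htop⟩ := hK
  have hmax : QuadraticOrder.IsMaximal a 1 := by
    refine QuadraticOrder.isMaximal_of_squarefree_discr ?_
    rw [ha]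
    exact (Int.squarefree_natCast.2 hd).squarefree_of_dvd (neg_dvd.2 dvd_rfl)
  have hdpos : (0 : ℚ) < d := by exact_mod_cast hd.ne_zero.bot_lt
  have haQ : (1 : ℚ) ^ 2 + 4 * a = -d := by exact_mod_cast ha
  have haK : (1 : K) ^ 2 + 4 * a = -d := by exact_mod_cast congr_arg (Int.cast (R := K)) ha
  have hθ : (1 + α) / 2 * ((1 + α) / 2) =
      (a : ℚ) • (1 : K) + ((1 : ℤ) : ℚ) • ((1 + α) / 2) := by
    simp only [Algebra.smul_def, eq_ratCast]
    push_cast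
    linear_combination (hα - haK) / 4
  have htop' : Algebra.adjoin ℚ {(1 + α) / 2} = ⊤ := by
    rw [← top_le_iff, ← htop, Algebra.adjoin_le_iff, Set.singleton_subset_iff, SetLike.mem_coe]
    have hmem := Algebra.self_mem_adjoin_singleton ℚ ((1 + α) / 2)
    convert sub_mem (add_mem hmem hmem) (one_mem _) using 1
    ring
  obtain ⟨e⟩ := nonempty_quadraticAlgebra_algEquiv (a := (a : ℚ)) (b := ((1 : ℤ) : ℚ))
    (sq_ne_add_mul_of_discr_neg (by push_cast; linarith)) hθ htop'
  exact hmax.nonempty_ringEquiv e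

theorem isPrime_span_two_iff [CharZero K] (hK : IsQsqrtNeg d K) (hd : Squarefree d) :
    (Ideal.span {(2 : 𝓞 K)}).IsPrime ↔ d % 8 = 3 := by
  by_cases hd4 : d % 4 = 3
  · obtain ⟨a, ha⟩ : ∃ a : ℤ, 1 ^ 2 + 4 * a = -d := ⟨-((d + 1) / 4), by lia⟩
    obtain ⟨e⟩ := hK.nonempty_quadraticOrder_one_ringEquiv hd ha
    rw [QuadraticOrder.isPrime_span_two_iff_of_ringEquiv e, Int.odd_iff]
    simp only [odd_one, and_true]
    lia
  · obtain ⟨e⟩ := hK.nonempty_quadraticOrder_zero_ringEquiv hd hd4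
    rw [QuadraticOrder.isPrime_span_two_iff_of_ringEquiv e]
    simp only [Int.not_odd_zero, and_false, false_iff]
    lia

theorem classGroup_eq_one_of_sq_eq_one [NumberField K] {p : ℕ} (hK : IsQsqrtNeg p K) (hp : p.Prime)
    (hp4 : p % 4 = 3) {x : ClassGroup (𝓞 K)} (hx : x ^ 2 = 1) : x = 1 := by
  obtain ⟨a, ha⟩ : ∃ a : ℤ, 1 ^ 2 + 4 * a = -p := ⟨-((p + 1) / 4), by lia⟩
  obtain ⟨e⟩ := hK.nonempty_quadraticOrder_one_ringEquiv hp.squarefree ha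
  have := isDedekindDomain_of_ringEquiv e
  have hΔ : Prime ((1 : ℤ) ^ 2 + 4 * a) := ha ▸ (Nat.prime_iff_prime_int.1 hp).neg
  refine (map_eq_one_iff _ (ClassGroup.mulEquiv e.symm).injective).1
    (QuadraticOrder.classGroup_eq_one_of_sq_eq_one hΔ (by lia) ?_)
  rw [← map_pow, hx, map_one]

end IsQsqrtNeg

theorem statement19_general (p : ℕ) (hp : p.Prime) (K : Type*) [Field K] [NumberField K]
    (hK : IsQsqrtNeg p K) :
    p % 8 = 3 ↔
      ((Ideal.span {(2 : 𝓞 K)}).IsPrime ∧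
        ∀ x : ClassGroup (𝓞 K), x ^ 2 = 1 → x = 1) := by
  rw [hK.isPrime_span_two_iff hp.squarefree, iff_self_and]
  exact fun hp8 _ ↦ hK.classGroup_eq_one_of_sq_eq_one hp (by lia)

theorem statement19 (p : ℕ) (hp : p.Prime) (hodd : Odd p)
    (K : Type) [Field K] [NumberField K] (hK : IsQsqrtNeg p K) :
    p % 8 = 3 ↔
      ((Ideal.span {(2 : 𝓞 K)}).IsPrime ∧
        ∀ x : ClassGroup (𝓞 K), x ^ 2 = 1 → x = 1) :=
  statement19_general p hp K hK
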